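/- arXiv:2109.06575 — 2 statements merged into one kernel-verified Lean document; each statement's English description precedes it below -/
import Mathlib

section
/- Let μ₀ be a measure on a measurable space X, let γ > 0 and k > 0 be real numbers, N a positive integer, f₁, …, f_N : X → ℂ measurable, and v : X → ℝ measurable. Let C be an invertible N×N complex matrix and set g_i := ∑_{l=1}^N C_{il} f_l. Assume ρ_g := N^{−1} ∑_{i=1}^N |g_i|² is strictly positive μ₀-almost everywhere, set u_g := k^{−1} log ρ_g, and assume c := ∫_X exp(−(γ u_g + (1−γ)v)) dμ₀ lies in (0,∞). Then Z := ∫_{X^N} |det[(f_i(x_j))_{i,j}]|^{−2γ/k} · exp(−(1−γ)(v(x₁)+⋯+v(x_N))) dμ₀^{⊗N} satisfies Z ≥ (N!)^{−γ/k} · |det C|^{2γ/k} · c^N. -/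
open MeasureTheory ENNReal Matrix

/-!
For a finite measure `ν` and functions `G i` with `N⁻¹ ∑ i, |G i| ^ 2 ≤ 1`, Andréief's identity
gives `∫ |det (G i (x j))| ^ 2 dν^N = N! det Gram(G)`, and by the arithmetic-geometric mean
inequality for the eigenvalues of the Gram matrix this is at most `N! ν(X) ^ N`. Jensen's inequality
for the convex function `t ↦ t ^ (-s)` turns this upper bound into the lower bound
`N! ^ (-s) ν(X) ^ N ≤ ∫ |det (G i (x j))| ^ (-2s) dν^N`.

The general case is reduced to this one: if a density `φ` of finite mass satisfies `φ ≤ ρ_f ^ (-s)`,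
where `ρ_f = N⁻¹ ∑ i, |f i| ^ 2`, then `G = φ ^ (1 / (2s)) f` satisfies the constraint, and under
`ν = φ μ` the powers of `φ` cancel in the determinant integral. It remains to let `φ` increase to
`ρ_f ^ (-s)`. The reference weight only changes `μ`, and the change of basis only scales the
determinant by `det C`.
-/

section Determinants

variable {ι : Type*} [Fintype ι]

lemma prod_le_sum_div_card_pow {z : ι → ℝ} (hz : ∀ i, 0 ≤ z i) :
    ∏ i, z i ≤ ((∑ i, z i) / Fintype.card ι) ^ Fintype.card ι := by
  rcases isEmpty_or_nonempty ι with _ | _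
  · simp
  have hcard : (Fintype.card ι : ℝ) ≠ 0 := Nat.cast_ne_zero.2 Fintype.card_ne_zero
  have hgm := Real.geom_mean_le_arith_mean_weighted Finset.univ
    (fun _ => (Fintype.card ι : ℝ)⁻¹) z (fun _ _ => by positivity) (by simp [hcard])
    fun i _ => hz i
  rw [Real.finsetProd_rpow _ _ fun i _ => hz i, ← Finset.mul_sum, inv_mul_eq_div] at hgm
  have hprod : 0 ≤ ∏ i, z i := Finset.prod_nonneg fun i _ => hz i
  calc ∏ i, z i = ((∏ i, z i) ^ (Fintype.card ι : ℝ)⁻¹) ^ Fintype.card ι :=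
        (Real.rpow_inv_natCast_pow hprod Fintype.card_ne_zero).symm
    _ ≤ _ := pow_le_pow_left₀ (Real.rpow_nonneg hprod _) hgm _

variable [DecidableEq ι] {𝕜 : Type*} [RCLike 𝕜]

open scoped ComplexOrder in
lemma re_det_le_re_trace_div_card_pow {M : Matrix ι ι 𝕜} (hM : M.PosSemidef) :
    RCLike.re M.det ≤ (RCLike.re M.trace / Fintype.card ι) ^ Fintype.card ι := by
  have hdet : RCLike.re M.det = ∏ i, hM.1.eigenvalues i := by
    rw [hM.1.det_eq_prod_eigenvalues, ← RCLike.ofReal_prod, RCLike.ofReal_re]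
  have htrace : RCLike.re M.trace = ∑ i, hM.1.eigenvalues i := by
    rw [hM.1.trace_eq_sum_eigenvalues, ← RCLike.ofReal_sum, RCLike.ofReal_re]
  rw [hdet, htrace]
  exact prod_le_sum_div_card_pow hM.eigenvalues_nonneg

lemma re_det_gram_le {E : Type*} [NormedAddCommGroup E] [InnerProductSpace 𝕜 E] (u : ι → E) :
    RCLike.re (gram 𝕜 u).det ≤ ((∑ i, ‖u i‖ ^ 2) / Fintype.card ι) ^ Fintype.card ι := by
  have htrace : RCLike.re (gram 𝕜 u).trace = ∑ i, ‖u i‖ ^ 2 := by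
    simp only [trace, diag_apply, gram_apply, map_sum, inner_self_eq_norm_sq]
  exact htrace ▸ re_det_le_re_trace_div_card_pow (posSemidef_gram 𝕜 u)

lemma sum_sign_mul_sign_mul_prod {R : Type*} [CommRing R] (M : Matrix ι ι R) :
    ∑ σ : Equiv.Perm ι, ∑ τ : Equiv.Perm ι,
        (Equiv.Perm.sign σ * Equiv.Perm.sign τ : R) * ∏ j, M (σ j) (τ j) =
      (Fintype.card ι).factorial * M.det := by
  have inner_sum (σ : Equiv.Perm ι) : ∑ τ : Equiv.Perm ι,
      (Equiv.Perm.sign σ * Equiv.Perm.sign τ : R) * ∏ j, M (σ j) (τ j) = M.det := by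
    have hperm : ∑ τ : Equiv.Perm ι, (Equiv.Perm.sign τ : R) * ∏ j, M (σ j) (τ j) =
        Equiv.Perm.sign σ * M.det := by
      rw [← det_permute, ← det_transpose, det_apply']
      rfl
    simp_rw [mul_assoc, ← Finset.mul_sum, hperm, ← mul_assoc, ← Int.cast_mul]
    simp [Int.units_coe_mul_self]
  simp [inner_sum, Fintype.card_perm]

end Determinants

section SlaterDet

variable {X ι R : Type*} [Fintype ι] [DecidableEq ι] [CommRing R]

/-- The Slater determinant `det (f i (x j))` of a finite family of functions `f i`, evaluated at
as many points `x j`. -/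
def slaterDet (f : ι → X → R) (x : ι → X) : R :=
  (Matrix.of fun i j => f i (x j)).det

lemma slaterDet_mul_left (q : X → R) (f : ι → X → R) (x : ι → X) :
    slaterDet (fun i y => q y * f i y) x = (∏ j, q (x j)) * slaterDet f x :=
  det_mul_row (fun j => q (x j)) (Matrix.of fun i j => f i (x j))

lemma slaterDet_linearCombination (C : Matrix ι ι R) (f : ι → X → R) (x : ι → X) :
    slaterDet (fun i y => ∑ l, C i l * f l y) x = C.det * slaterDet f x :=
  det_mul C (Matrix.of fun i j => f i (x j))

lemma slaterDet_mul_slaterDet (φ ψ : ι → X → R) (x : ι → X) :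
    slaterDet φ x * slaterDet ψ x = ∑ σ : Equiv.Perm ι, ∑ τ : Equiv.Perm ι,
      (Equiv.Perm.sign σ * Equiv.Perm.sign τ : R) * ∏ j, (φ (σ j) (x j) * ψ (τ j) (x j)) := by
  rw [slaterDet, slaterDet, det_apply', det_apply', Finset.sum_mul_sum]
  refine Finset.sum_congr rfl fun σ _ => Finset.sum_congr rfl fun τ _ => ?_
  simp only [of_apply, Finset.prod_mul_distrib]
  ring

variable {𝕜 : Type*} [RCLike 𝕜]

lemma slaterDet_conj (f : ι → X → 𝕜) (x : ι → X) :
    slaterDet (fun i y => starRingEnd 𝕜 (f i y)) x = starRingEnd 𝕜 (slaterDet f x) :=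
  (RingHom.map_det (starRingEnd 𝕜) (Matrix.of fun i j => f i (x j))).symm

variable [MeasurableSpace X] {μ : Measure X}

lemma measurable_slaterDet {f : ι → X → 𝕜} (hf : ∀ i, Measurable (f i)) :
    Measurable (slaterDet f) := by
  unfold slaterDet
  simp only [det_apply', of_apply]
  fun_prop

variable [SigmaFinite μ] {φ ψ : ι → X → 𝕜}

lemma integrable_sign_mul_sign_mul_prod (h : ∀ i j, Integrable (fun y => φ i y * ψ j y) μ)
    (σ τ : Equiv.Perm ι) :
    Integrable (fun x : ι → X => (Equiv.Perm.sign σ * Equiv.Perm.sign τ : 𝕜) *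
      ∏ j, (φ (σ j) (x j) * ψ (τ j) (x j))) (Measure.pi fun _ => μ) :=
  (Integrable.fintype_prod (f := fun j y => φ (σ j) y * ψ (τ j) y) fun _ => h _ _).const_mul _

lemma integrable_slaterDet_mul_slaterDet (h : ∀ i j, Integrable (fun y => φ i y * ψ j y) μ) :
    Integrable (fun x => slaterDet φ x * slaterDet ψ x) (Measure.pi fun _ => μ) := by
  simp only [slaterDet_mul_slaterDet]
  exact integrable_finsetSum _ fun σ _ => integrable_finsetSum _ fun τ _ =>
    integrable_sign_mul_sign_mul_prod h σ τ

/-- Andréief's identity. -/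
lemma integral_slaterDet_mul_slaterDet (h : ∀ i j, Integrable (fun y => φ i y * ψ j y) μ) :
    ∫ x, slaterDet φ x * slaterDet ψ x ∂(Measure.pi fun _ => μ) =
      (Fintype.card ι).factorial * (Matrix.of fun i j => ∫ y, φ i y * ψ j y ∂μ).det := by
  have hterm := integrable_sign_mul_sign_mul_prod h
  simp only [slaterDet_mul_slaterDet]
  rw [integral_finsetSum _ fun σ _ => integrable_finsetSum _ fun τ _ => hterm σ τ,
    ← sum_sign_mul_sign_mul_prod]
  refine Finset.sum_congr rfl fun σ _ => ?_
  rw [integral_finsetSum _ fun τ _ => hterm σ τ]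
  refine Finset.sum_congr rfl fun τ _ => ?_
  rw [integral_const_mul, integral_fintype_prod_eq_prod fun j y => φ (σ j) y * ψ (τ j) y]
  rfl

variable {f : ι → X → 𝕜}

lemma lintegral_enorm_slaterDet_sq_eq_det_gram (hf : ∀ i, MemLp (f i) 2 μ) :
    ∫⁻ x, ‖slaterDet f x‖ₑ ^ 2 ∂(Measure.pi fun _ => μ) =
      (Fintype.card ι).factorial *
        ENNReal.ofReal (RCLike.re (gram 𝕜 fun i => (hf i).toLp (f i)).det) := by
  have hconj (i j) : Integrable (fun y => starRingEnd 𝕜 (f i y) * f j y) μ :=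
    (hf i).star.integrable_mul (hf j)
  have hsq (x : ι → X) : slaterDet (fun i y => starRingEnd 𝕜 (f i y)) x * slaterDet f x =
      ((‖slaterDet f x‖ ^ 2 : ℝ) : 𝕜) := by
    rw [slaterDet_conj, RCLike.conj_mul, RCLike.ofReal_pow]
  have hgram : (Matrix.of fun i j => ∫ y, starRingEnd 𝕜 (f i y) * f j y ∂μ) =
      gram 𝕜 fun i => (hf i).toLp (f i) := by
    ext i j
    rw [gram_apply, L2.inner_def, of_apply]
    refine integral_congr_ae ?_
    filter_upwards [(hf i).coeFn_toLp, (hf j).coeFn_toLp] with y hi hj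
    rw [hi, hj, RCLike.inner_apply']
  have hintegrable := integrable_slaterDet_mul_slaterDet hconj
  have hintegral := integral_slaterDet_mul_slaterDet hconj
  simp only [hsq, hgram] at hintegrable hintegral
  have hreal : Integrable (fun x => ‖slaterDet f x‖ ^ 2) (Measure.pi fun _ => μ) := by
    simpa only [RCLike.ofReal_re] using hintegrable.re
  rw [integral_ofReal] at hintegral
  have hre := congrArg RCLike.re hintegral
  rw [RCLike.ofReal_re, ← RCLike.ofReal_natCast, RCLike.re_ofReal_mul] at hre
  rw [← ENNReal.ofReal_natCast, ← ENNReal.ofReal_mul (Nat.cast_nonneg _), ← hre,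
    ofReal_integral_eq_lintegral_ofReal hreal (ae_of_all _ fun _ => by positivity)]
  simp only [ENNReal.ofReal_pow (norm_nonneg _), ofReal_norm]

end SlaterDet

section MeanSqNorm

variable {X ι 𝕜 : Type*} [Fintype ι] [RCLike 𝕜]

/-- The Bergman-type density `ρ_f = N⁻¹ ∑ i, |f i| ^ 2` of a family of `N` functions. It takes
values in `ℝ≥0∞`, so that `ρ_f ^ (-s)` is `∞` at the common zeros of the family. -/
noncomputable def meanSqNorm (f : ι → X → 𝕜) (y : X) : ℝ≥0∞ :=
  (Fintype.card ι : ℝ≥0∞)⁻¹ * ∑ i, ‖f i y‖ₑ ^ 2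

lemma meanSqNorm_eq_ofReal (f : ι → X → 𝕜) (y : X) :
    meanSqNorm f y = ENNReal.ofReal ((Fintype.card ι : ℝ)⁻¹ * ∑ i, ‖f i y‖ ^ 2) := by
  rcases isEmpty_or_nonempty ι with _ | _
  · simp [meanSqNorm]
  rw [meanSqNorm, ENNReal.ofReal_mul (by positivity), ENNReal.ofReal_inv_of_pos (by positivity),
    ENNReal.ofReal_natCast, ENNReal.ofReal_sum_of_nonneg fun _ _ => by positivity]
  simp only [ENNReal.ofReal_pow (norm_nonneg _), ofReal_norm]

lemma meanSqNorm_mul_left (q : X → 𝕜) (f : ι → X → 𝕜) (y : X) :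
    meanSqNorm (fun i y => q y * f i y) y = ‖q y‖ₑ ^ 2 * meanSqNorm f y := by
  simp only [meanSqNorm, enorm_mul, mul_pow, ← Finset.mul_sum]
  ring

lemma enorm_sq_le_card_mul_meanSqNorm (f : ι → X → 𝕜) (i : ι) (y : X) :
    ‖f i y‖ₑ ^ 2 ≤ Fintype.card ι * meanSqNorm f y := by
  have : Nonempty ι := ⟨i⟩
  rw [meanSqNorm, ← mul_assoc, ENNReal.mul_inv_cancel (by simp) (by simp), one_mul]
  exact Finset.single_le_sum_of_canonicallyOrdered (f := fun i => ‖f i y‖ₑ ^ 2) (Finset.mem_univ i)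

variable [MeasurableSpace X] {μ : Measure X} {f : ι → X → 𝕜}

lemma measurable_meanSqNorm (hf : ∀ i, Measurable (f i)) : Measurable (meanSqNorm f) := by
  unfold meanSqNorm
  fun_prop

lemma memLp_two_of_lintegral_meanSqNorm_ne_top (hf : ∀ i, AEStronglyMeasurable (f i) μ)
    (h : ∫⁻ y, meanSqNorm f y ∂μ ≠ ⊤) (i : ι) : MemLp (f i) 2 μ := by
  refine ⟨hf i, (eLpNorm_lt_top_iff_lintegral_rpow_enorm_lt_top two_ne_zero ofNat_ne_top).2 ?_⟩
  simp only [toReal_ofNat, rpow_ofNat]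
  calc ∫⁻ y, ‖f i y‖ₑ ^ 2 ∂μ ≤ ∫⁻ y, Fintype.card ι * meanSqNorm f y ∂μ :=
        lintegral_mono fun y => enorm_sq_le_card_mul_meanSqNorm f i y
    _ = Fintype.card ι * ∫⁻ y, meanSqNorm f y ∂μ := lintegral_const_mul' _ _ (by simp)
    _ < ⊤ := by finiteness

variable [DecidableEq ι] [SigmaFinite μ]

lemma lintegral_enorm_slaterDet_sq_le (hf : ∀ i, MemLp (f i) 2 μ) :
    ∫⁻ x, ‖slaterDet f x‖ₑ ^ 2 ∂(Measure.pi fun _ => μ) ≤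
      (Fintype.card ι).factorial * (∫⁻ y, meanSqNorm f y ∂μ) ^ Fintype.card ι := by
  have hnorm (i) : ∫⁻ y, ‖f i y‖ₑ ^ 2 ∂μ = ENNReal.ofReal (‖(hf i).toLp (f i)‖ ^ 2) := by
    have := eLpNorm_nnreal_pow_eq_lintegral (f := f i) (μ := μ) (p := 2) two_ne_zero
    rw [ENNReal.ofReal_pow (norm_nonneg _), ofReal_norm, Lp.enorm_toLp]
    simpa using this.symm
  have hmean : ∫⁻ y, meanSqNorm f y ∂μ =
      ENNReal.ofReal ((∑ i, ‖(hf i).toLp (f i)‖ ^ 2) / Fintype.card ι) := by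
    rcases isEmpty_or_nonempty ι with _ | _
    · simp [meanSqNorm]
    simp only [meanSqNorm]
    rw [lintegral_const_mul' _ _ (by simp),
      lintegral_finsetSum' _ fun i _ => (hf i).1.enorm.pow_const 2, div_eq_inv_mul,
      ENNReal.ofReal_mul (by positivity), ENNReal.ofReal_sum_of_nonneg fun _ _ => by positivity,
      ENNReal.ofReal_inv_of_pos (by positivity), ENNReal.ofReal_natCast]
    simp only [hnorm]
  rw [lintegral_enorm_slaterDet_sq_eq_det_gram hf, hmean, ← ENNReal.ofReal_pow (by positivity)]
  gcongr
  exact re_det_gram_le _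

end MeanSqNorm

section ProductMeasures

lemma lintegral_fin_prod_eq_prod {n : ℕ} {X : Fin n → Type*} [∀ i, MeasurableSpace (X i)]
    {μ : ∀ i, Measure (X i)} [∀ i, SigmaFinite (μ i)] {φ : ∀ i, X i → ℝ≥0∞}
    (hφ : ∀ i, Measurable (φ i)) :
    ∫⁻ x, ∏ i, φ i (x i) ∂Measure.pi μ = ∏ i, ∫⁻ y, φ i y ∂μ i := by
  induction n with
  | zero => simp [lintegral_const]
  | succ n ih =>
    have htail : Measurable fun x : ∀ i : Fin n, X i.succ => ∏ i, φ i.succ (x i) :=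
      Finset.measurable_prod _ fun i _ => (hφ i.succ).comp (measurable_pi_apply i)
    have hmp := (measurePreserving_piFinSuccAbove μ 0).symm
    rw [← hmp.lintegral_comp_emb (MeasurableEquiv.measurableEmbedding _), Fin.prod_univ_succ,
      ← ih fun i => hφ i.succ, ← lintegral_prod_mul (hφ 0).aemeasurable htail.aemeasurable]
    simp only [Fin.prod_univ_succ]
    rfl

variable {ι : Type*} [Fintype ι] {X : ι → Type*} [∀ i, MeasurableSpace (X i)]
  {μ : ∀ i, Measure (X i)} [∀ i, SigmaFinite (μ i)] {φ : ∀ i, X i → ℝ≥0∞}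

lemma lintegral_fintype_prod_eq_prod (hφ : ∀ i, Measurable (φ i)) :
    ∫⁻ x, ∏ i, φ i (x i) ∂Measure.pi μ = ∏ i, ∫⁻ y, φ i y ∂μ i := by
  let e := (Fintype.equivFin ι).symm
  rw [← (measurePreserving_piCongrLeft μ e).lintegral_comp_emb
    (MeasurableEquiv.measurableEmbedding _), ← e.prod_comp,
    ← lintegral_fin_prod_eq_prod fun i => hφ (e i)]
  simp only [← e.prod_comp, MeasurableEquiv.coe_piCongrLeft, Equiv.piCongrLeft_apply_apply]

lemma pi_withDensity (hφ : ∀ i, Measurable (φ i)) [∀ i, SigmaFinite ((μ i).withDensity (φ i))] :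
    Measure.pi (fun i => (μ i).withDensity (φ i)) =
      (Measure.pi μ).withDensity fun x => ∏ i, φ i (x i) := by
  refine Measure.pi_eq fun S hS => ?_
  rw [withDensity_apply _ (.univ_pi hS), Measure.restrict_pi_pi,
    lintegral_fintype_prod_eq_prod hφ]
  exact Finset.prod_congr rfl fun i _ => (withDensity_apply _ (hS i)).symm

end ProductMeasures

section NegativePowers

lemma mul_rpow_inv_mul_rpow_neg_le {p d : ℝ≥0∞} (hp : p ≠ ⊤) (hd : d ≠ ⊤) {t : ℝ} (ht : 0 < t) :
    p * (p ^ t⁻¹ * d) ^ (-t) ≤ d ^ (-t) := by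
  have hroot : p ^ t⁻¹ ≠ ⊤ := ENNReal.rpow_ne_top_of_nonneg (inv_nonneg.2 ht.le) hp
  calc p * (p ^ t⁻¹ * d) ^ (-t) = p * p⁻¹ * d ^ (-t) := by
        rw [ENNReal.mul_rpow_of_ne_top hroot hd, ← ENNReal.rpow_mul, mul_neg,
          inv_mul_cancel₀ ht.ne', ENNReal.rpow_neg_one, mul_assoc]
    _ ≤ d ^ (-t) := mul_le_of_le_one_left' (ENNReal.mul_inv_le_one p)

lemma rpow_inv_mul_le_one_of_le_rpow_neg {p r : ℝ≥0∞} {s : ℝ} (hs : 0 < s)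
    (hle : p ≤ r ^ (-s)) : p ^ s⁻¹ * r ≤ 1 :=
  calc p ^ s⁻¹ * r ≤ (r ^ (-s)) ^ s⁻¹ * r := by gcongr
    _ = r⁻¹ * r := by
      rw [← ENNReal.rpow_mul, neg_mul, mul_inv_cancel₀ hs.ne', ENNReal.rpow_neg_one]
    _ ≤ 1 := ENNReal.inv_mul_le_one r

/-- The tangent line of `t ↦ t ^ (-s)` at `t = 1`, arranged to avoid subtraction in `ℝ≥0∞`. -/
lemma one_add_le_rpow_neg_add_mul {s : ℝ} (hs : 0 < s) (t : ℝ≥0∞) :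
    1 + ENNReal.ofReal s ≤ t ^ (-s) + ENNReal.ofReal s * t := by
  have hs' : ENNReal.ofReal s ≠ 0 := (ENNReal.ofReal_pos.2 hs).ne'
  rcases eq_or_ne t ⊤ with rfl | ht_top
  · simp [ENNReal.mul_top hs']
  rcases eq_or_ne t 0 with rfl | ht_zero
  · simp [hs]
  lift t to NNReal using ht_top
  have ht : 0 < (t : ℝ) := by exact_mod_cast pos_iff_ne_zero.2 ht_zero
  have hreal : 1 + s ≤ (t : ℝ) ^ (-s) + s * t := by
    have hexp := Real.add_one_le_exp (Real.log t * -s)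
    have hlog := mul_le_mul_of_nonneg_left (Real.log_le_sub_one_of_pos ht) hs.le
    rw [Real.rpow_def_of_pos ht]
    linarith
  rw [← ENNReal.ofReal_coe_nnreal, ENNReal.ofReal_rpow_of_pos ht, ← ENNReal.ofReal_one,
    ← ENNReal.ofReal_mul hs.le, ← ENNReal.ofReal_add zero_le_one hs.le,
    ← ENNReal.ofReal_add (by positivity) (by positivity)]
  exact ENNReal.ofReal_le_ofReal hreal

lemma rpow_neg_mul_measure_univ_le_lintegral {α : Type*} [MeasurableSpace α] {P : Measure α}
    [IsFiniteMeasure P] {F : α → ℝ≥0∞} (hF : AEMeasurable F P) {s : ℝ} (hs : 0 < s) {m : ℝ≥0∞}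
    (hm_zero : m ≠ 0) (hm_top : m ≠ ⊤) (hFm : ∫⁻ x, F x ∂P ≤ m * P Set.univ) :
    m ^ (-s) * P Set.univ ≤ ∫⁻ x, F x ^ (-s) ∂P := by
  have hmean : ∫⁻ x, m⁻¹ * F x ∂P ≤ P Set.univ := by
    rw [lintegral_const_mul' _ _ (ENNReal.inv_ne_top.2 hm_zero)]
    calc m⁻¹ * ∫⁻ x, F x ∂P ≤ m⁻¹ * (m * P Set.univ) := by gcongr
      _ = P Set.univ := ENNReal.inv_mul_cancel_left' (by simp [hm_zero]) (by simp [hm_top])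
  have hscale (x) : (m⁻¹ * F x) ^ (-s) = m ^ s * F x ^ (-s) := by
    rw [ENNReal.rpow_neg, ENNReal.mul_rpow_of_nonneg _ _ hs.le, ENNReal.inv_rpow,
      ENNReal.mul_inv (by simp [hm_top, hm_zero]) (by simp [hm_top, hm_zero]), inv_inv,
      ENNReal.rpow_neg]
  have hpow_top : m ^ s ≠ ⊤ := ENNReal.rpow_ne_top_of_nonneg hs.le hm_top
  have hpow_zero : m ^ s ≠ 0 := (ENNReal.rpow_pos (pos_iff_ne_zero.2 hm_zero) hm_top).ne'
  have htangent : P Set.univ + ENNReal.ofReal s * P Set.univ ≤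
      m ^ s * ∫⁻ x, F x ^ (-s) ∂P + ENNReal.ofReal s * P Set.univ :=
    calc P Set.univ + ENNReal.ofReal s * P Set.univ
        = ∫⁻ _, (1 + ENNReal.ofReal s) ∂P := by rw [lintegral_const, add_mul, one_mul]
      _ ≤ ∫⁻ x, ((m⁻¹ * F x) ^ (-s) + ENNReal.ofReal s * (m⁻¹ * F x)) ∂P :=
        lintegral_mono fun x => one_add_le_rpow_neg_add_mul hs _
      _ = m ^ s * ∫⁻ x, F x ^ (-s) ∂P + ENNReal.ofReal s * ∫⁻ x, m⁻¹ * F x ∂P := by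
        rw [lintegral_add_right' _ (by fun_prop), lintegral_const_mul' _ _ ENNReal.ofReal_ne_top]
        simp only [hscale, lintegral_const_mul' _ _ hpow_top]
      _ ≤ _ := by gcongr
  have hcancel := ENNReal.le_of_add_le_add_right (by finiteness) htangent
  rw [ENNReal.rpow_neg]
  exact ENNReal.inv_mul_le_iff hpow_zero hpow_top |>.2 hcancel

end NegativePowers

section SigmaFiniteMeasures

variable {X : Type*} [MeasurableSpace X] {μ : Measure X} {h : X → ℝ≥0∞}

lemma exists_nnreal_tendsto_lintegral [SigmaFinite μ] (hh : Measurable h) :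
    ∃ φ : ℕ → X → NNReal, (∀ n, Measurable (φ n)) ∧ (∀ n, ∫⁻ y, φ n y ∂μ ≠ ⊤) ∧
      (∀ n y, φ n y ≤ h y) ∧
      Filter.Tendsto (fun n => ∫⁻ y, φ n y ∂μ) Filter.atTop (nhds (∫⁻ y, h y ∂μ)) := by
  let S := spanningSets μ
  have hS (n) : MeasurableSet (S n) := measurableSet_spanningSets μ n
  let trunc : ℕ → X → ℝ≥0∞ := fun n => (S n).indicator fun y => min (h y) n
  have htrunc_le (n y) : trunc n y ≤ min (h y) n := Set.indicator_le_self _ _ y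
  have htrunc_meas (n) : Measurable (trunc n) := (hh.min measurable_const).indicator (hS n)
  have htrunc_coe (n y) : ((trunc n y).toNNReal : ℝ≥0∞) = trunc n y :=
    ENNReal.coe_toNNReal (((htrunc_le n y).trans (min_le_right _ _)).trans_lt (by simp)).ne
  refine ⟨fun n y => (trunc n y).toNNReal, fun n => (htrunc_meas n).ennreal_toNNReal, ?_, ?_, ?_⟩
    <;> simp only [htrunc_coe]
  · intro n
    rw [lintegral_indicator (hS n)]
    refine ((lintegral_mono fun y => min_le_right (h y) n).trans_lt ?_).ne
    rw [setLIntegral_const]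
    exact ENNReal.mul_lt_top (by simp) (measure_spanningSets_lt_top μ n)
  · exact fun n y => (htrunc_le n y).trans (min_le_left _ _)
  · refine lintegral_tendsto_of_tendsto_of_monotone (fun n => (htrunc_meas n).aemeasurable)
      (ae_of_all _ fun y m n hmn => ?_) (ae_of_all _ fun y => ?_)
    · exact (Set.indicator_le_indicator_of_subset (monotone_spanningSets μ hmn) (by simp) y).trans
        (Set.indicator_le_indicator (by gcongr))
    · have hmin : Filter.Tendsto (fun n : ℕ => min (h y) n) Filter.atTop (nhds (h y)) := by
        simpa using tendsto_const_nhds.min ENNReal.tendsto_nat_nhds_top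
      refine hmin.congr' ?_
      filter_upwards [eventually_mem_spanningSets μ y] with n hn
      exact (Set.indicator_of_mem hn fun y => min (h y) (n : ℝ≥0∞)).symm

lemma sigmaFinite_of_lintegral_ne_top (hh : Measurable h)
    (hh_zero : ∀ᵐ y ∂μ, h y ≠ 0) (hh_int : ∫⁻ y, h y ∂μ ≠ ⊤) : SigmaFinite μ := by
  have : IsFiniteMeasure (μ.withDensity h) := isFiniteMeasure_withDensity hh_int
  rw [← withDensity_inv_same hh hh_zero ((ae_lt_top hh hh_int).mono fun _ => LT.lt.ne)]
  refine SigmaFinite.withDensity_of_ne_top ?_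
  filter_upwards [withDensity_absolutelyContinuous μ h hh_zero] with y hy
  exact ENNReal.inv_ne_top.2 hy

end SigmaFiniteMeasures

section SlaterDetLowerBound

variable {X ι 𝕜 : Type*} [Fintype ι] [DecidableEq ι] [RCLike 𝕜] [MeasurableSpace X]
  {μ : Measure X} {f : ι → X → 𝕜} {s : ℝ}

lemma rpow_neg_factorial_mul_pow_le_of_meanSqNorm_le_one [IsFiniteMeasure μ] (hs : 0 < s)
    (hf : ∀ i, Measurable (f i)) (hle : ∀ y, meanSqNorm f y ≤ 1) :
    ((Fintype.card ι).factorial : ℝ≥0∞) ^ (-s) * μ Set.univ ^ Fintype.card ι ≤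
      ∫⁻ x, ‖slaterDet f x‖ₑ ^ (-(2 * s)) ∂(Measure.pi fun _ => μ) := by
  have hmean : ∫⁻ y, meanSqNorm f y ∂μ ≤ μ Set.univ :=
    (lintegral_mono hle).trans_eq lintegral_one
  have hL2 := memLp_two_of_lintegral_meanSqNorm_ne_top (fun i => (hf i).aestronglyMeasurable)
    (hmean.trans_lt (measure_lt_top μ _)).ne
  have huniv : Measure.pi (fun _ : ι => μ) Set.univ = μ Set.univ ^ Fintype.card ι := by
    simp [Measure.pi_univ]
  have hdet : ∫⁻ x, ‖slaterDet f x‖ₑ ^ 2 ∂(Measure.pi fun _ => μ) ≤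
      (Fintype.card ι).factorial * Measure.pi (fun _ : ι => μ) Set.univ := by
    rw [huniv]
    refine (lintegral_enorm_slaterDet_sq_le hL2).trans ?_
    gcongr
  have hjensen := rpow_neg_mul_measure_univ_le_lintegral
    ((measurable_slaterDet hf).enorm.pow_const 2).aemeasurable hs
    (by simp [Nat.factorial_ne_zero]) (by simp) hdet
  rw [huniv] at hjensen
  refine hjensen.trans_eq (lintegral_congr fun x => ?_)
  rw [← ENNReal.rpow_natCast, ← ENNReal.rpow_mul, Nat.cast_ofNat, mul_neg]

lemma rpow_neg_factorial_mul_lintegral_pow_le_of_le [SigmaFinite μ] (hs : 0 < s)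
    (hf : ∀ i, Measurable (f i)) {φ : X → NNReal} (hφ : Measurable φ)
    (hφ_int : ∫⁻ y, φ y ∂μ ≠ ⊤) (hle : ∀ y, φ y ≤ meanSqNorm f y ^ (-s)) :
    ((Fintype.card ι).factorial : ℝ≥0∞) ^ (-s) * (∫⁻ y, φ y ∂μ) ^ Fintype.card ι ≤
      ∫⁻ x, ‖slaterDet f x‖ₑ ^ (-(2 * s)) ∂(Measure.pi fun _ => μ) := by
  have h2s : 0 < 2 * s := by positivity
  let q : X → 𝕜 := fun y => ((φ y ^ (2 * s)⁻¹ : NNReal) : ℝ)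
  let G : ι → X → 𝕜 := fun i y => q y * f i y
  have hq_norm (y : X) : ‖q y‖ₑ = (φ y : ℝ≥0∞) ^ (2 * s)⁻¹ := by
    rw [← ENNReal.coe_rpow_of_nonneg _ (by positivity), ← ofReal_norm, RCLike.norm_ofReal,
      NNReal.abs_eq, ENNReal.ofReal_coe_nnreal]
  have hq : Measurable q := RCLike.measurable_ofReal.comp (by fun_prop)
  have hG_le (y : X) : meanSqNorm G y ≤ 1 := by
    have hhalf : (2 * s)⁻¹ * (2 : ℕ) = s⁻¹ := by push_cast; field_simp
    rw [meanSqNorm_mul_left, hq_norm, ← ENNReal.rpow_natCast, ← ENNReal.rpow_mul, hhalf]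
    exact rpow_inv_mul_le_one_of_le_rpow_neg hs (hle y)
  have hG_det (x : ι → X) :
      ‖slaterDet G x‖ₑ = (∏ j, (φ (x j) : ℝ≥0∞)) ^ (2 * s)⁻¹ * ‖slaterDet f x‖ₑ := by
    rw [slaterDet_mul_left, enorm_mul, ← ENNReal.prod_rpow_of_nonneg (by positivity)]
    simp only [enorm_eq_nnnorm, nnnorm_prod, ENNReal.ofNNReal_finsetProd, ← hq_norm]
  have : IsFiniteMeasure (μ.withDensity fun y => φ y) := isFiniteMeasure_withDensity hφ_int
  have hG_meas (i) : Measurable (G i) := hq.mul (hf i)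
  have hφ' : Measurable fun y => (φ y : ℝ≥0∞) := hφ.coe_nnreal_ennreal
  have hjensen := rpow_neg_factorial_mul_pow_le_of_meanSqNorm_le_one
    (μ := μ.withDensity fun y => φ y) hs hG_meas hG_le
  rw [withDensity_apply _ .univ, setLIntegral_univ, pi_withDensity fun _ => hφ',
    lintegral_withDensity_eq_lintegral_mul _ (by fun_prop)
      ((measurable_slaterDet hG_meas).enorm.pow_const _)] at hjensen
  refine hjensen.trans (lintegral_mono fun x => ?_)
  rw [Pi.mul_apply, hG_det]
  exact mul_rpow_inv_mul_rpow_neg_le (ENNReal.prod_ne_top fun _ _ => coe_ne_top) enorm_ne_top h2s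

variable [SigmaFinite μ]

lemma rpow_neg_factorial_mul_lintegral_pow_le (hs : 0 < s) (hf : ∀ i, Measurable (f i)) :
    ((Fintype.card ι).factorial : ℝ≥0∞) ^ (-s) *
        (∫⁻ y, meanSqNorm f y ^ (-s) ∂μ) ^ Fintype.card ι ≤
      ∫⁻ x, ‖slaterDet f x‖ₑ ^ (-(2 * s)) ∂(Measure.pi fun _ => μ) := by
  obtain ⟨φ, hφ, hφ_int, hφ_le, hφ_lim⟩ :=
    exists_nnreal_tendsto_lintegral (μ := μ) ((measurable_meanSqNorm hf).pow_const (-s))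
  refine le_of_tendsto (ENNReal.Tendsto.const_mul (ENNReal.Tendsto.pow hφ_lim) (.inr ?_))
    (.of_forall fun n =>
      rpow_neg_factorial_mul_lintegral_pow_le_of_le hs hf (hφ n) (hφ_int n) (hφ_le n))
  exact ENNReal.rpow_ne_top_of_ne_zero (by simp [Nat.factorial_ne_zero]) (by simp)

lemma rpow_neg_factorial_mul_lintegral_mul_pow_le (hs : 0 < s) (hf : ∀ i, Measurable (f i))
    {w : X → NNReal} (hw : Measurable w) :
    ((Fintype.card ι).factorial : ℝ≥0∞) ^ (-s) *
        (∫⁻ y, meanSqNorm f y ^ (-s) * w y ∂μ) ^ Fintype.card ι ≤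
      ∫⁻ x, ‖slaterDet f x‖ₑ ^ (-(2 * s)) * ∏ j, (w (x j) : ℝ≥0∞)
        ∂(Measure.pi fun _ => μ) := by
  have hw' : Measurable fun y => (w y : ℝ≥0∞) := hw.coe_nnreal_ennreal
  have hbound := rpow_neg_factorial_mul_lintegral_pow_le (μ := μ.withDensity fun y => w y) hs hf
  rw [pi_withDensity fun _ => hw',
    lintegral_withDensity_eq_lintegral_mul _ hw' ((measurable_meanSqNorm hf).pow_const _),
    lintegral_withDensity_eq_lintegral_mul _ (by fun_prop)
      ((measurable_slaterDet hf).enorm.pow_const _)] at hbound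
  simpa only [Pi.mul_apply, mul_comm] using hbound

lemma rpow_neg_factorial_mul_enorm_det_mul_lintegral_pow_le (hs : 0 < s)
    (hf : ∀ i, Measurable (f i)) {w : X → NNReal} (hw : Measurable w) (C : Matrix ι ι 𝕜) :
    ((Fintype.card ι).factorial : ℝ≥0∞) ^ (-s) * ‖C.det‖ₑ ^ (2 * s) *
        (∫⁻ y, meanSqNorm (fun i y => ∑ l, C i l * f l y) y ^ (-s) * w y ∂μ) ^ Fintype.card ι ≤
      ∫⁻ x, ‖slaterDet f x‖ₑ ^ (-(2 * s)) * ∏ j, (w (x j) : ℝ≥0∞)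
        ∂(Measure.pi fun _ => μ) := by
  have h2s : 0 < 2 * s := by positivity
  rcases eq_or_ne C.det 0 with hC | hC
  · simp [hC, h2s]
  have hC_rpow : ‖C.det‖ₑ ^ (2 * s) * ‖C.det‖ₑ ^ (-(2 * s)) = 1 := by
    rw [← ENNReal.rpow_add _ _ (enorm_ne_zero.2 hC) enorm_ne_top, add_neg_cancel,
      ENNReal.rpow_zero]
  have hg (i) : Measurable fun y => ∑ l, C i l * f l y := by fun_prop
  have hbound := rpow_neg_factorial_mul_lintegral_mul_pow_le (μ := μ) hs hg hw
  simp only [slaterDet_linearCombination, enorm_mul, mul_assoc,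
    ENNReal.mul_rpow_of_ne_top enorm_ne_top enorm_ne_top] at hbound
  rw [lintegral_const_mul' _ _ (ENNReal.rpow_ne_top_of_ne_zero (enorm_ne_zero.2 hC) enorm_ne_top)]
    at hbound
  rw [mul_comm (_ ^ (-s)), mul_assoc]
  refine (mul_le_mul_right hbound _).trans_eq ?_
  rw [← mul_assoc, hC_rpow, one_mul]

end SlaterDetLowerBound

lemma ofReal_exp_neg_add_mul_log {γ k r : ℝ} (hr : 0 < r) (a : ℝ) :
    ENNReal.ofReal (Real.exp (-(γ * (k⁻¹ * Real.log r) + a))) =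
      ENNReal.ofReal r ^ (-(γ / k)) * ENNReal.ofReal (Real.exp (-a)) := by
  rw [ENNReal.ofReal_rpow_of_pos hr, Real.rpow_def_of_pos hr,
    ← ENNReal.ofReal_mul (Real.exp_nonneg _), ← Real.exp_add]
  congr 2
  ring

theorem partition_function_ge_quantized_ding_general
    {X ι 𝕜 : Type*} [Fintype ι] [DecidableEq ι] [RCLike 𝕜] [MeasurableSpace X]
    (μ₀ : Measure X) [SigmaFinite μ₀] (γ k : ℝ) (hγk : 0 < γ / k)
    (f : ι → X → 𝕜) (hf : ∀ i, Measurable (f i))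
    (v : X → ℝ) (hv : Measurable v)
    (C : Matrix ι ι 𝕜)
    (g : ι → X → 𝕜) (hg : g = fun i x => ∑ l, C i l * f l x)
    (ρg : X → ℝ) (hρg : ρg = fun x => (Fintype.card ι : ℝ)⁻¹ * ∑ i, ‖g i x‖ ^ 2)
    (hpos : ∀ᵐ x ∂μ₀, 0 < ρg x)
    (ug : X → ℝ) (hug : ug = fun x => k⁻¹ * Real.log (ρg x)) :
    ((Fintype.card ι).factorial : ℝ≥0∞) ^ (-(γ / k)) * ‖C.det‖ₑ ^ (2 * γ / k) *
        (∫⁻ x, ENNReal.ofReal (Real.exp (-(γ * ug x + (1 - γ) * v x))) ∂μ₀) ^ Fintype.card ι ≤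
      ∫⁻ x : ι → X, ‖(Matrix.of fun i j => f i (x j)).det‖ₑ ^ (-(2 * γ / k)) *
        ENNReal.ofReal (Real.exp (-(1 - γ) * ∑ j, v (x j))) ∂(Measure.pi fun _ => μ₀) := by
  have hdensity : ∀ᵐ x ∂μ₀, ENNReal.ofReal (Real.exp (-(γ * ug x + (1 - γ) * v x))) =
      meanSqNorm g x ^ (-(γ / k)) * ENNReal.ofReal (Real.exp (-((1 - γ) * v x))) := by
    filter_upwards [hpos] with x hx
    rw [hug, ofReal_exp_neg_add_mul_log hx, meanSqNorm_eq_ofReal, hρg]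
  have hprod (x : ι → X) : ENNReal.ofReal (Real.exp (-(1 - γ) * ∑ j, v (x j))) =
      ∏ j, ENNReal.ofReal (Real.exp (-((1 - γ) * v (x j)))) := by
    rw [← ENNReal.ofReal_prod_of_nonneg fun _ _ => Real.exp_nonneg _, ← Real.exp_sum,
      Finset.mul_sum]
    simp only [neg_mul]
  have hw : Measurable fun x => (Real.exp (-((1 - γ) * v x))).toNNReal := by fun_prop
  simp only [lintegral_congr_ae hdensity, hprod, hg, mul_div_assoc]
  exact rpow_neg_factorial_mul_enorm_det_mul_lintegral_pow_le hγk hf hw C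

/-- Trivialized form of Theorem 3.3: the partition function `Z` is bounded below by
`(N!)^(-γ/k) · |det C|^(2γ/k) · c^N`, where `c` is the integral of
`e^{-(γ u_g + (1-γ) v)}` for the Fubini–Study type potential `u_g = k⁻¹ log ρ_g`. -/
theorem partition_function_ge_quantized_ding
    {X : Type*} [MeasurableSpace X] (μ₀ : Measure X)
    (γ k : ℝ) (hγ : 0 < γ) (hk : 0 < k)
    (N : ℕ) (hN : 0 < N)
    (f : Fin N → X → ℂ) (hf : ∀ i, Measurable (f i))
    (v : X → ℝ) (hv : Measurable v)
    (C : Matrix (Fin N) (Fin N) ℂ) (hC : IsUnit C.det)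
    (g : Fin N → X → ℂ) (hg : g = fun i x => ∑ l, C i l * f l x)
    (ρg : X → ℝ) (hρg : ρg = fun x => (N : ℝ)⁻¹ * ∑ i, ‖g i x‖ ^ 2)
    (hpos : ∀ᵐ x ∂μ₀, 0 < ρg x)
    (ug : X → ℝ) (hug : ug = fun x => k⁻¹ * Real.log (ρg x))
    (c : ℝ≥0∞)
    (hc : c = ∫⁻ x, ENNReal.ofReal (Real.exp (-(γ * ug x + (1 - γ) * v x))) ∂μ₀)
    (hc0 : 0 < c) (hctop : c < ⊤) :
    (Nat.factorial N : ℝ≥0∞) ^ (-(γ / k)) * (‖C.det‖₊ : ℝ≥0∞) ^ (2 * γ / k) * c ^ N ≤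
      ∫⁻ x : Fin N → X,
        (‖(Matrix.of fun i j => f i (x j)).det‖₊ : ℝ≥0∞) ^ (-(2 * γ / k)) *
          ENNReal.ofReal (Real.exp (-(1 - γ) * ∑ j, v (x j)))
        ∂(Measure.pi fun _ : Fin N => μ₀) := by
  have hint_ne_top := hc ▸ hctop.ne
  have hug_meas : Measurable ug := by subst hug hρg hg; fun_prop
  have : SigmaFinite μ₀ := sigmaFinite_of_lintegral_ne_top (by fun_prop)
    (.of_forall fun x => (ENNReal.ofReal_pos.2 (Real.exp_pos _)).ne') hint_ne_top
  simpa [hc, enorm_eq_nnnorm] using partition_function_ge_quantized_ding_general μ₀ γ k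
    (div_pos hγ hk) f hf v hv C g hg ρg (by simpa using hρg) hpos ug hug
end

section
/- Let μ₀ be a measure on a measurable space X, let γ > 0 and k > 0 be real numbers, N a positive integer, f₁, …, f_N : X → ℂ measurable, and u, v : X → ℝ measurable such that the measure ν := exp(−(γu + (1−γ)v))·μ₀ is a nonzero finite measure and each f_i·conj(f_j)·exp(−ku) is ν-integrable. Assume the N×N Gram matrix G with entries G_{ij} = ∫_X f_i·conj(f_j)·exp(−ku) dν is positive definite, and let C be an invertible N×N complex matrix with C·G·Cᴴ = Id. Set g_i := ∑_l C_{il} f_l, assume ρ := N^{−1}∑_i |g_i|²·exp(−ku) is strictly positive μ₀-almost everywhere, and define u_G := u + k^{−1} log ρ. Then ∫_X exp(−(γ u_G + (1−γ)v)) dμ₀ ≥ ( ∫_X exp(−(γu + (1−γ)v)) dμ₀ )^{1+γ/k}. -/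
open MeasureTheory ENNReal Matrix
open scoped ComplexOrder

/-!
Write `ν = e^{-(γ u + (1 - γ) v)} μ₀`. Substituting `u_G = u + k⁻¹ log ρ` gives
`e^{-(γ u_G + (1 - γ) v)} μ₀ = ρ^{-γ/k} ν`, so the claim is `ν(X)^{1 + γ/k} ≤ ∫ ρ^{-γ/k} dν`.
Orthonormality of the `g_i` gives `∫ ρ dν = 1`, and Hölder's inequality applied to
`1 = ρ^{s/(1+s)} · (ρ^{-s})^{1/(1+s)}` with `s = γ/k` concludes.
-/

section Holder

variable {X : Type*} [MeasurableSpace X] {μ : Measure X}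

theorem measure_univ_rpow_one_add_le_lintegral_rpow_mul_lintegral_rpow_neg {h : X → ℝ≥0∞}
    {s : ℝ} (hs : 0 ≤ s) (hh : AEMeasurable h μ) (h_ne_zero : ∀ᵐ x ∂μ, h x ≠ 0)
    (h_ne_top : ∀ᵐ x ∂μ, h x ≠ ∞) :
    μ Set.univ ^ (1 + s) ≤ (∫⁻ x, h x ∂μ) ^ s * ∫⁻ x, h x ^ (-s) ∂μ := by
  have hs1 : 0 < 1 + s := by positivity
  have factorization : ∀ᵐ x ∂μ, h x ^ (s / (1 + s)) * (h x ^ (-s)) ^ (1 / (1 + s)) = 1 := by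
    filter_upwards [h_ne_zero, h_ne_top] with x hx0 hx
    rw [← ENNReal.rpow_mul, ← ENNReal.rpow_add _ _ hx0 hx,
      show s / (1 + s) + -s * (1 / (1 + s)) = 0 by ring, ENNReal.rpow_zero]
  have holder : μ Set.univ ≤
      (∫⁻ x, h x ∂μ) ^ (s / (1 + s)) * (∫⁻ x, h x ^ (-s) ∂μ) ^ (1 / (1 + s)) := by
    rw [← lintegral_one, ← lintegral_congr_ae factorization]
    exact ENNReal.lintegral_mul_norm_pow_le hh (hh.pow_const _) (by positivity) (by positivity)
      (by field_simp; ring)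
  calc μ Set.univ ^ (1 + s)
      ≤ ((∫⁻ x, h x ∂μ) ^ (s / (1 + s)) * (∫⁻ x, h x ^ (-s) ∂μ) ^ (1 / (1 + s))) ^ (1 + s) :=
        ENNReal.rpow_le_rpow holder hs1.le
    _ = (∫⁻ x, h x ∂μ) ^ s * ∫⁻ x, h x ^ (-s) ∂μ := by
        rw [ENNReal.mul_rpow_of_nonneg _ _ hs1.le, ← ENNReal.rpow_mul, ← ENNReal.rpow_mul,
          div_mul_cancel₀ _ hs1.ne', div_mul_cancel₀ _ hs1.ne', ENNReal.rpow_one]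

end Holder

section Gram

variable {X ι κ 𝕜 : Type*} [RCLike 𝕜]

/-- The functions `g_i = ∑ l, C i l * f_l` obtained from the family `f` by the (not necessarily
square) coefficient matrix `C`. -/
def linearCombinations [Fintype ι] (C : Matrix κ ι 𝕜) (f : ι → X → 𝕜) : κ → X → 𝕜 :=
  fun i x => ∑ l, C i l * f l x

/-- The normalized Bergman function `ρ` of the family `g` for the weight `w`: the average over `i`
of the densities `|g_i|² w`. -/
noncomputable def bergmanDensity [Fintype κ] (g : κ → X → 𝕜) (w : X → ℝ) : X → ℝ :=
  fun x => (Fintype.card κ : ℝ)⁻¹ * (∑ i, ‖g i x‖ ^ 2) * w x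

theorem bergmanDensity_eq_inv_card_mul_sum [Fintype κ] (g : κ → X → 𝕜) (w : X → ℝ) :
    bergmanDensity g w = fun x => (Fintype.card κ : ℝ)⁻¹ * ∑ i, ‖g i x‖ ^ 2 * w x := by
  funext x
  rw [bergmanDensity, mul_assoc, Finset.sum_mul]

theorem linearCombinations_mul_conj_mul [Fintype ι] (C : Matrix κ ι 𝕜) (f : ι → X → 𝕜)
    (w : X → ℝ) (i j : κ) (x : X) :
    linearCombinations C f i x * starRingEnd 𝕜 (linearCombinations C f j x) * (w x : 𝕜) =
      ∑ l, ∑ m, C i l * starRingEnd 𝕜 (C j m) *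
        (f l x * starRingEnd 𝕜 (f m x) * (w x : 𝕜)) := by
  simp only [linearCombinations, map_sum, map_mul, Finset.sum_mul, Finset.mul_sum]
  rw [Finset.sum_comm]
  exact Finset.sum_congr rfl fun l _ => Finset.sum_congr rfl fun m _ => by ring

theorem mul_conj_mul_ofReal (z : 𝕜) (t : ℝ) :
    z * starRingEnd 𝕜 z * (t : 𝕜) = ((‖z‖ ^ 2 * t : ℝ) : 𝕜) := by
  rw [RCLike.mul_conj]
  push_cast
  rfl

variable [MeasurableSpace X] {ν : Measure X} {w : X → ℝ}

/-- The Gram matrix of the family `f` for the `L²` Hermitian form with weight `w`, linear in the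
first argument. -/
noncomputable def weightedGram (f : ι → X → 𝕜) (w : X → ℝ) (ν : Measure X) : Matrix ι ι 𝕜 :=
  Matrix.of fun i j => ∫ x, f i x * starRingEnd 𝕜 (f j x) * (w x : 𝕜) ∂ν

section LinearCombinations

variable [Fintype ι] {f : ι → X → 𝕜}

theorem integrable_linearCombinations_mul_conj_mul
    (hf : ∀ i j, Integrable (fun x => f i x * starRingEnd 𝕜 (f j x) * (w x : 𝕜)) ν)
    (C : Matrix κ ι 𝕜) (i j : κ) :
    Integrable (fun x => linearCombinations C f i x *
      starRingEnd 𝕜 (linearCombinations C f j x) * (w x : 𝕜)) ν := by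
  simp only [linearCombinations_mul_conj_mul]
  exact integrable_finsetSum _ fun l _ => integrable_finsetSum _ fun m _ => (hf l m).const_mul _

theorem weightedGram_linearCombinations
    (hf : ∀ i j, Integrable (fun x => f i x * starRingEnd 𝕜 (f j x) * (w x : 𝕜)) ν)
    (C : Matrix κ ι 𝕜) :
    weightedGram (linearCombinations C f) w ν = C * weightedGram f w ν * Cᴴ := by
  ext i j
  calc weightedGram (linearCombinations C f) w ν i j
      = ∑ l, ∑ m, C i l * starRingEnd 𝕜 (C j m) * weightedGram f w ν l m := by
        simp only [weightedGram, of_apply, linearCombinations_mul_conj_mul]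
        rw [integral_finsetSum _ fun l _ =>
          integrable_finsetSum _ fun m _ => (hf l m).const_mul _]
        refine Finset.sum_congr rfl fun l _ => ?_
        rw [integral_finsetSum _ fun m _ => (hf l m).const_mul _]
        simp only [integral_const_mul]
    _ = (C * weightedGram f w ν * Cᴴ) i j := by
        simp only [mul_apply, conjTranspose_apply, Finset.sum_mul, starRingEnd_apply]
        rw [Finset.sum_comm]
        exact Finset.sum_congr rfl fun m _ => Finset.sum_congr rfl fun l _ => by ring

end LinearCombinations

section Bergman

variable {g : κ → X → 𝕜}

theorem weightedGram_apply_self (i : κ) :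
    weightedGram g w ν i i = ((∫ x, ‖g i x‖ ^ 2 * w x ∂ν : ℝ) : 𝕜) := by
  simp only [weightedGram, of_apply, mul_conj_mul_ofReal, integral_ofReal]

theorem integrable_norm_sq_mul {h : X → 𝕜}
    (hh : Integrable (fun x => h x * starRingEnd 𝕜 (h x) * (w x : 𝕜)) ν) :
    Integrable (fun x => ‖h x‖ ^ 2 * w x) ν := by
  simpa only [mul_conj_mul_ofReal, RCLike.ofReal_re] using hh.re

variable [Fintype κ]

theorem integrable_bergmanDensity
    (hg : ∀ i, Integrable (fun x => g i x * starRingEnd 𝕜 (g i x) * (w x : 𝕜)) ν) :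
    Integrable (bergmanDensity g w) ν := by
  rw [bergmanDensity_eq_inv_card_mul_sum]
  exact (integrable_finsetSum _ fun i _ => integrable_norm_sq_mul (hg i)).const_mul _

theorem integral_bergmanDensity_eq_one [Nonempty κ] [DecidableEq κ]
    (hg : ∀ i, Integrable (fun x => g i x * starRingEnd 𝕜 (g i x) * (w x : 𝕜)) ν)
    (orthonormal : weightedGram g w ν = 1) : ∫ x, bergmanDensity g w x ∂ν = 1 := by
  have integral_norm_sq (i : κ) : ∫ x, ‖g i x‖ ^ 2 * w x ∂ν = 1 := by
    have diagonal := weightedGram_apply_self (g := g) (w := w) (ν := ν) i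
    rw [orthonormal, one_apply_eq] at diagonal
    exact_mod_cast diagonal.symm
  rw [bergmanDensity_eq_inv_card_mul_sum, integral_const_mul,
    integral_finsetSum _ fun i _ => integrable_norm_sq_mul (hg i)]
  simp [integral_norm_sq]

theorem lintegral_bergmanDensity_eq_one [Nonempty κ] [DecidableEq κ] (hw : 0 ≤ w)
    (hg : ∀ i, Integrable (fun x => g i x * starRingEnd 𝕜 (g i x) * (w x : 𝕜)) ν)
    (orthonormal : weightedGram g w ν = 1) :
    ∫⁻ x, ENNReal.ofReal (bergmanDensity g w x) ∂ν = 1 := by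
  have nonneg (x : X) : 0 ≤ bergmanDensity g w x := mul_nonneg (by positivity) (hw x)
  rw [← ofReal_integral_eq_lintegral_ofReal (integrable_bergmanDensity hg) (ae_of_all _ nonneg),
    integral_bergmanDensity_eq_one hg orthonormal, ENNReal.ofReal_one]

end Bergman

end Gram

section Potential

variable {X : Type*}

/-- The potential `u + k⁻¹ log ρ`; for `ρ` the normalized Bergman function of a family that is
orthonormal for the weight `e^{-ku}`, this is the Fubini–Study potential `u_G`. It is meaningful
only where `0 < ρ`: elsewhere `Real.log` takes a junk value. -/
noncomputable def fubiniStudyPotential (k : ℝ) (u ρ : X → ℝ) : X → ℝ :=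
  fun x => u x + k⁻¹ * Real.log (ρ x)

theorem ofReal_exp_neg_fubiniStudyPotential {k γ b : ℝ} {u ρ : X → ℝ} {x : X} (hρ : 0 < ρ x) :
    ENNReal.ofReal (Real.exp (-(γ * fubiniStudyPotential k u ρ x + b))) =
      ENNReal.ofReal (Real.exp (-(γ * u x + b))) * ENNReal.ofReal (ρ x) ^ (-(γ / k)) := by
  rw [ENNReal.ofReal_rpow_of_pos hρ, ← ENNReal.ofReal_mul (Real.exp_nonneg _),
    Real.rpow_def_of_pos hρ, ← Real.exp_add, fubiniStudyPotential]
  ring_nf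

variable [MeasurableSpace X] {μ : Measure X}

/-- The measure `e^{-φ} μ` attached to the potential `φ`, not normalized (so it may be infinite). -/
noncomputable def expNegMeasure (μ : Measure X) (φ : X → ℝ) : Measure X :=
  μ.withDensity fun x => ENNReal.ofReal (Real.exp (-φ x))

theorem expNegMeasure_univ (φ : X → ℝ) :
    expNegMeasure μ φ Set.univ = ∫⁻ x, ENNReal.ofReal (Real.exp (-φ x)) ∂μ := by
  rw [expNegMeasure, withDensity_apply _ MeasurableSet.univ, Measure.restrict_univ]

theorem lintegral_exp_neg_fubiniStudyPotential {γ k : ℝ} {u b ρ : X → ℝ}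
    (hu : AEMeasurable u μ) (hb : AEMeasurable b μ)
    (hρ : AEMeasurable ρ (expNegMeasure μ fun x => γ * u x + b x))
    (hρ_pos : ∀ᵐ x ∂μ, 0 < ρ x) :
    ∫⁻ x, ENNReal.ofReal (Real.exp (-(γ * fubiniStudyPotential k u ρ x + b x))) ∂μ =
      ∫⁻ x, ENNReal.ofReal (ρ x) ^ (-(γ / k)) ∂expNegMeasure μ fun x => γ * u x + b x := by
  rw [expNegMeasure, lintegral_withDensity_eq_lintegral_mul₀' (by fun_prop)
    (hρ.ennreal_ofReal.pow_const _)]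
  refine lintegral_congr_ae ?_
  filter_upwards [hρ_pos] with x hx
  exact ofReal_exp_neg_fubiniStudyPotential hx

theorem lintegral_exp_neg_rpow_le_of_lintegral_eq_one {γ k : ℝ} (hγk : 0 ≤ γ / k)
    {u b ρ : X → ℝ} (hu : AEMeasurable u μ) (hb : AEMeasurable b μ)
    (hρ : AEMeasurable ρ (expNegMeasure μ fun x => γ * u x + b x))
    (hρ_pos : ∀ᵐ x ∂μ, 0 < ρ x)
    (hρ_one : ∫⁻ x, ENNReal.ofReal (ρ x) ∂(expNegMeasure μ fun x => γ * u x + b x) = 1) :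
    (∫⁻ x, ENNReal.ofReal (Real.exp (-(γ * u x + b x))) ∂μ) ^ (1 + γ / k) ≤
      ∫⁻ x, ENNReal.ofReal (Real.exp (-(γ * fubiniStudyPotential k u ρ x + b x))) ∂μ := by
  have hρ_ne_zero : ∀ᵐ x ∂expNegMeasure μ fun x => γ * u x + b x, ENNReal.ofReal (ρ x) ≠ 0 := by
    filter_upwards [(withDensity_absolutelyContinuous μ _).ae_le hρ_pos] with x hx
    exact (ENNReal.ofReal_pos.2 hx).ne'
  have holder := measure_univ_rpow_one_add_le_lintegral_rpow_mul_lintegral_rpow_neg hγk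
    hρ.ennreal_ofReal hρ_ne_zero (ae_of_all _ fun _ => ENNReal.ofReal_ne_top)
  rwa [hρ_one, ENNReal.one_rpow, one_mul, expNegMeasure_univ,
    ← lintegral_exp_neg_fubiniStudyPotential hu hb hρ hρ_pos] at holder

end Potential

theorem fubini_study_potential_inequality_general
    {X ι κ 𝕜 : Type*} [RCLike 𝕜] [MeasurableSpace X] [Fintype ι] [Fintype κ] [Nonempty κ]
    [DecidableEq κ] {μ : Measure X} {γ k : ℝ} (hγ : 0 ≤ γ) (hk : 0 < k) {u v : X → ℝ}
    (hu : AEMeasurable u μ) (hv : AEMeasurable v μ) {f : ι → X → 𝕜}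
    (hf : ∀ i j, Integrable
      (fun x => f i x * starRingEnd 𝕜 (f j x) * (Real.exp (-(k * u x)) : 𝕜))
      (expNegMeasure μ fun x => γ * u x + (1 - γ) * v x))
    {C : Matrix κ ι 𝕜}
    (orthonormal : C * weightedGram f (fun x => Real.exp (-(k * u x)))
      (expNegMeasure μ fun x => γ * u x + (1 - γ) * v x) * Cᴴ = 1)
    {ρ : X → ℝ}
    (hρ : ρ = bergmanDensity (linearCombinations C f) fun x => Real.exp (-(k * u x)))
    (hρ_pos : ∀ᵐ x ∂μ, 0 < ρ x) :
    (∫⁻ x, ENNReal.ofReal (Real.exp (-(γ * u x + (1 - γ) * v x))) ∂μ) ^ (1 + γ / k) ≤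
      ∫⁻ x, ENNReal.ofReal
        (Real.exp (-(γ * fubiniStudyPotential k u ρ x + (1 - γ) * v x))) ∂μ := by
  subst hρ
  have hg (i : κ) := integrable_linearCombinations_mul_conj_mul hf C i i
  exact lintegral_exp_neg_rpow_le_of_lintegral_eq_one (by positivity) hu (hv.const_mul _)
    (integrable_bergmanDensity hg).aemeasurable hρ_pos
    (lintegral_bergmanDensity_eq_one (fun _ => Real.exp_nonneg _) hg
      ((weightedGram_linearCombinations hf C).trans orthonormal))

/-- Trivialized form of the first inequality of Proposition 3.1:
`∫ e^{-(γ u_G + (1-γ)v)} dμ₀ ≥ (∫ e^{-(γ u + (1-γ)v)} dμ₀)^{1+γ/k}`, where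
`u_G = u + k⁻¹ log ρ` is the Fubini–Study potential of the Gram matrix `G`. -/
theorem fubini_study_potential_inequality
    {X : Type*} [MeasurableSpace X] (μ₀ : Measure X)
    (γ k : ℝ) (hγ : 0 < γ) (hk : 0 < k)
    (N : ℕ) (hN : 0 < N)
    (f : Fin N → X → ℂ) (hf : ∀ i, Measurable (f i))
    (u v : X → ℝ) (hu : Measurable u) (hv : Measurable v)
    (ν : Measure X)
    (hν : ν = μ₀.withDensity fun x =>
      ENNReal.ofReal (Real.exp (-(γ * u x + (1 - γ) * v x))))
    (hν0 : ν ≠ 0) (hνfin : IsFiniteMeasure ν)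
    (hint : ∀ i j, Integrable
      (fun x => f i x * (starRingEnd ℂ) (f j x) * (Real.exp (-(k * u x)) : ℂ)) ν)
    (G : Matrix (Fin N) (Fin N) ℂ)
    (hG : G = Matrix.of fun i j =>
      ∫ x, f i x * (starRingEnd ℂ) (f j x) * (Real.exp (-(k * u x)) : ℂ) ∂ν)
    (hGpos : G.PosDef)
    (C : Matrix (Fin N) (Fin N) ℂ) (hC : IsUnit C.det) (hCG : C * G * Cᴴ = 1)
    (g : Fin N → X → ℂ) (hg : g = fun i x => ∑ l, C i l * f l x)
    (ρ : X → ℝ)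
    (hρ : ρ = fun x => (N : ℝ)⁻¹ * (∑ i, ‖g i x‖ ^ 2) * Real.exp (-(k * u x)))
    (hρpos : ∀ᵐ x ∂μ₀, 0 < ρ x)
    (uG : X → ℝ) (huG : uG = fun x => u x + k⁻¹ * Real.log (ρ x)) :
    (∫⁻ x, ENNReal.ofReal (Real.exp (-(γ * u x + (1 - γ) * v x))) ∂μ₀) ^ (1 + γ / k)
      ≤ ∫⁻ x, ENNReal.ofReal (Real.exp (-(γ * uG x + (1 - γ) * v x))) ∂μ₀ := by
  have : NeZero N := ⟨hN.ne'⟩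
  subst hν hG hg huG
  exact fubini_study_potential_inequality_general hγ.le hk hu.aemeasurable hv.aemeasurable hint
    hCG (by funext x; simp only [hρ, bergmanDensity, linearCombinations, Fintype.card_fin]) hρpos
end
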